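/- Let F be a field, α_1,…,α_n distinct nonzero elements of F, and t ≤ d natural numbers. Let C ⊆ {1,…,n} with |C| ≤ t. Let (f_i)_{i∈C} be polynomials over F of degree at most d and (g_i)_{i∈C} polynomials over F of degree at most t satisfying f_i(α_j) = g_j(α_i) for all i, j ∈ C. Then for every polynomial q over F of degree at most d with q(α_i) = g_i(0) for all i ∈ C, there exists a bivariate polynomial F(x,y) over F of degree at most (d,t) such that F(x,0) = q(x), F(x,α_i) = f_i(x) for all i ∈ C, and F(α_i,y) = g_i(y) for all i ∈ C. (This is the extension claim underlying the privacy of sharing a degree-d polynomial q embedded at y = 0 in a random degree-(d,t) bivariate polynomial: the at most t row and column polynomials learnt by the adversary are consistent with every candidate degree-d sharing polynomial.) -/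

import Mathlib

open Polynomial

/-!
Prescribing rows and columns of a bivariate polynomial is an interpolation problem on a grid.
Lagrange interpolation in `y` produces a polynomial with the prescribed rows; by consistency its
columns differ from the prescribed ones by polynomials in `y` vanishing at every row node, so
Lagrange interpolation of these differences in `x` repairs the columns without touching the rows.
The sharing polynomial `q` is one more row, at the node `0`.
-/

/-- The bivariate polynomial `P(x, y)` has degree at most `(l, m)`: degree at most `l` in the inner
variable `x` and at most `m` in the outer variable `y`. -/
structure BidegreeLE {R : Type*} [Semiring R] (P : R[X][X]) (l m : ℕ) : Prop where
  natDegree_coeff_le : ∀ k, (P.coeff k).natDegree ≤ l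
  natDegree_le : P.natDegree ≤ m

theorem BidegreeLE.add {R : Type*} [Semiring R] {P Q : R[X][X]} {l m : ℕ}
    (hP : BidegreeLE P l m) (hQ : BidegreeLE Q l m) : BidegreeLE (P + Q) l m where
  natDegree_coeff_le k := by
    rw [coeff_add]
    exact natDegree_add_le_of_degree_le (hP.natDegree_coeff_le k) (hQ.natDegree_coeff_le k)
  natDegree_le := natDegree_add_le_of_degree_le hP.natDegree_le hQ.natDegree_le

theorem BidegreeLE.natDegree_map_evalRingHom_le {R : Type*} [CommSemiring R] {P : R[X][X]}
    {l m : ℕ} (hP : BidegreeLE P l m) (a : R) : (P.map (evalRingHom a)).natDegree ≤ m :=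
  natDegree_map_le.trans hP.natDegree_le

section SeparatedSum

variable {R ι : Type*} [CommSemiring R] (s : Finset ι) (u v : ι → R[X])

/-- The bivariate polynomial `∑ i ∈ s, u i (x) * v i (y)`, the common shape of the Lagrange
interpolants by rows and by columns. -/
noncomputable def separatedSum : R[X][X] :=
  ∑ i ∈ s, C (u i) * (v i).map C

theorem eval_C_separatedSum (b : R) :
    (separatedSum s u v).eval (C b) = ∑ i ∈ s, (v i).eval b • u i := by
  simp [separatedSum, eval_finsetSum, eval_map, eval₂_at_apply, smul_eq_C_mul, mul_comm]

theorem map_evalRingHom_separatedSum (a : R) :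
    (separatedSum s u v).map (evalRingHom a) = ∑ i ∈ s, (u i).eval a • v i := by
  have evalRingHom_comp_C : (evalRingHom a).comp C = RingHom.id R := by
    ext; simp
  simp [separatedSum, Polynomial.map_sum, Polynomial.map_map, evalRingHom_comp_C, smul_eq_C_mul]

variable {s u v} in
theorem bidegreeLE_separatedSum {l m : ℕ} (hu : ∀ i ∈ s, (u i).natDegree ≤ l)
    (hv : ∀ i ∈ s, (v i).natDegree ≤ m) : BidegreeLE (separatedSum s u v) l m where
  natDegree_coeff_le k := by
    rw [separatedSum, finsetSum_coeff]
    refine natDegree_sum_le_of_forall_le _ _ fun i hi => ?_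
    rw [coeff_C_mul, coeff_map]
    exact (natDegree_mul_C_le _ _).trans (hu i hi)
  natDegree_le := natDegree_sum_le_of_forall_le _ _ fun i hi =>
    (natDegree_C_mul_le _ _).trans (natDegree_map_le.trans (hv i hi))

end SeparatedSum

section Interpolation

variable {F ι κ : Type*} [Field F] {s : Finset ι} {b : ι → F} {l m : ℕ}

theorem natDegree_lagrangeBasis_le [DecidableEq ι] (hb : Set.InjOn b s) (hs : s.card ≤ m + 1)
    {i : ι} (hi : i ∈ s) : (Lagrange.basis s b i).natDegree ≤ m :=
  (Lagrange.natDegree_basis hb hi).trans_le (Nat.sub_le_of_le_add hs)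

theorem sum_eval_lagrangeBasis_smul [DecidableEq ι] {M : Type*} [AddCommMonoid M] [Module F M]
    (hb : Set.InjOn b s) (u : ι → M) {i : ι} (hi : i ∈ s) :
    ∑ j ∈ s, (Lagrange.basis s b j).eval (b i) • u j = u i := by
  rw [Finset.sum_eq_single_of_mem i hi, Lagrange.eval_basis_self hb hi, one_smul]
  intro j _ hji
  rw [Lagrange.eval_basis_of_ne hji hi, zero_smul]

theorem exists_bidegreeLE_rows_eq (hb : Set.InjOn b s) (hs : s.card ≤ m + 1) {f : ι → F[X]}
    (hf : ∀ i ∈ s, (f i).natDegree ≤ l) :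
    ∃ P : F[X][X], BidegreeLE P l m ∧ ∀ i ∈ s, P.eval (C (b i)) = f i := by
  classical
  refine ⟨separatedSum s f (Lagrange.basis s b),
    bidegreeLE_separatedSum hf fun i hi => natDegree_lagrangeBasis_le hb hs hi, fun i hi => ?_⟩
  rw [eval_C_separatedSum, sum_eval_lagrangeBasis_smul hb f hi]

theorem exists_bidegreeLE_columns_eq_rows_eq_zero {t : Finset κ} {a : κ → F}
    (ha : Set.InjOn a t) (ht : t.card ≤ l + 1) {g : κ → F[X]}
    (hg : ∀ j ∈ t, (g j).natDegree ≤ m) :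
    ∃ P : F[X][X], BidegreeLE P l m ∧ (∀ j ∈ t, P.map (evalRingHom (a j)) = g j) ∧
      ∀ y, (∀ j ∈ t, (g j).eval y = 0) → P.eval (C y) = 0 := by
  classical
  refine ⟨separatedSum t (Lagrange.basis t a) g,
    bidegreeLE_separatedSum (fun j hj => natDegree_lagrangeBasis_le ha ht hj) hg,
    fun j hj => ?_, fun y hy => ?_⟩
  · rw [map_evalRingHom_separatedSum, sum_eval_lagrangeBasis_smul ha g hj]
  · rw [eval_C_separatedSum]
    exact Finset.sum_eq_zero fun j hj => by rw [hy j hj, zero_smul]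

theorem exists_bidegreeLE_rows_eq_columns_eq {t : Finset κ} {a : κ → F}
    (hb : Set.InjOn b s) (hs : s.card ≤ m + 1) (ha : Set.InjOn a t) (ht : t.card ≤ l + 1)
    {f : ι → F[X]} (hf : ∀ i ∈ s, (f i).natDegree ≤ l)
    {g : κ → F[X]} (hg : ∀ j ∈ t, (g j).natDegree ≤ m)
    (hfg : ∀ i ∈ s, ∀ j ∈ t, (f i).eval (a j) = (g j).eval (b i)) :
    ∃ P : F[X][X], BidegreeLE P l m ∧ (∀ i ∈ s, P.eval (C (b i)) = f i) ∧
      ∀ j ∈ t, P.map (evalRingHom (a j)) = g j := by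
  obtain ⟨A, hA, hA_row⟩ := exists_bidegreeLE_rows_eq hb hs hf
  let error (j : κ) : F[X] := g j - A.map (evalRingHom (a j))
  have natDegree_error_le : ∀ j ∈ t, (error j).natDegree ≤ m := fun j hj =>
    (natDegree_sub_le _ _).trans (max_le (hg j hj) (hA.natDegree_map_evalRingHom_le (a j)))
  have error_eval_node : ∀ i ∈ s, ∀ j ∈ t, (error j).eval (b i) = 0 := fun i hi j hj => by
    rw [eval_sub, map_evalRingHom_eval, evalEval, hA_row i hi, hfg i hi j hj, sub_self]
  obtain ⟨B, hB, hB_col, hB_row⟩ :=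
    exists_bidegreeLE_columns_eq_rows_eq_zero ha ht natDegree_error_le
  refine ⟨A + B, hA.add hB, fun i hi => ?_, fun j hj => ?_⟩
  · rw [eval_add, hA_row i hi, hB_row (b i) (error_eval_node i hi), add_zero]
  · rw [Polynomial.map_add, hB_col j hj, add_sub_cancel]

end Interpolation

theorem injOn_elim_insertNone {ι β : Type*} {s : Finset ι} {f : ι → β} {b : β}
    (hf : Set.InjOn f s) (hb : ∀ i ∈ s, f i ≠ b) :
    Set.InjOn (fun o : Option ι => o.elim b f) (Finset.insertNone s) := by
  rintro (_ | i) hi (_ | j) hj hij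
  · rfl
  · exact absurd hij.symm (hb j (Finset.some_mem_insertNone.1 hj))
  · exact absurd hij (hb i (Finset.some_mem_insertNone.1 hi))
  · exact congrArg some
      (hf (Finset.some_mem_insertNone.1 hi) (Finset.some_mem_insertNone.1 hj) hij)

theorem stmt_9_general {F ι : Type*} [Field F] {t d : ℕ} {α : ι → F} {s : Finset ι}
    (hα : Set.InjOn α s) (hα0 : ∀ i ∈ s, α i ≠ 0) (hst : s.card ≤ t) (hsd : s.card ≤ d + 1)
    {f g : ι → F[X]} (hf : ∀ i ∈ s, (f i).natDegree ≤ d) (hg : ∀ i ∈ s, (g i).natDegree ≤ t)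
    (hfg : ∀ i ∈ s, ∀ j ∈ s, (f i).eval (α j) = (g j).eval (α i))
    {q : F[X]} (hq : q.natDegree ≤ d) (hqg : ∀ i ∈ s, q.eval (α i) = (g i).eval 0) :
    ∃ P : F[X][X], (∀ k, (P.coeff k).natDegree ≤ d) ∧ P.natDegree ≤ t ∧ P.eval 0 = q ∧
      (∀ i ∈ s, P.eval (C (α i)) = f i) ∧ ∀ i ∈ s, P.map (evalRingHom (α i)) = g i := by
  let row (o : Option ι) : F[X] := o.elim q f
  have card_rows : (Finset.insertNone s).card ≤ t + 1 := by
    rw [Finset.card_insertNone]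
    exact Nat.succ_le_succ hst
  obtain ⟨P, hP, hP_row, hP_col⟩ := exists_bidegreeLE_rows_eq_columns_eq (f := row)
    (injOn_elim_insertNone hα hα0) card_rows hα hsd
    (Finset.forall_mem_insertNone.2 ⟨hq, hf⟩) hg (Finset.forall_mem_insertNone.2 ⟨hqg, hfg⟩)
  obtain ⟨hP_zero, hP_some⟩ := Finset.forall_mem_insertNone.1 hP_row
  exact ⟨P, hP.natDegree_coeff_le, hP.natDegree_le, by simpa [row] using hP_zero, hP_some, hP_col⟩

/-- Extension lemma for degree-`(d,t)` bivariate sharing with the Shamir polynomial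
embedded at `y = 0`: given at most `t` consistent row polynomials `f i` (degree ≤ d) and
column polynomials `g i` (degree ≤ t), every degree-`≤ d` polynomial `q` with
`q (α i) = g i (0)` extends to a bivariate polynomial of degree at most `(d,t)` with
`F(x,0) = q(x)` and the given rows and columns.
A bivariate polynomial `F(x,y)` is represented as `P : Polynomial (Polynomial F)`
(polynomial in `y` with coefficients polynomials in `x`): `F(x, α) = P.eval (C α)`, so in
particular `F(x, 0) = P.eval 0`, and `F(α, y) = P.map (evalRingHom α)`. -/
theorem stmt_9 (F : Type*) [Field F] (n t d : ℕ) (htd : t ≤ d)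
    (α : Fin n → F) (hα : Function.Injective α) (hα0 : ∀ i, α i ≠ 0)
    (Cs : Finset (Fin n)) (hCs : Cs.card ≤ t)
    (f g : Fin n → F[X])
    (hf : ∀ i ∈ Cs, (f i).natDegree ≤ d) (hg : ∀ i ∈ Cs, (g i).natDegree ≤ t)
    (hcons : ∀ i ∈ Cs, ∀ j ∈ Cs, (f i).eval (α j) = (g j).eval (α i))
    (q : F[X]) (hq : q.natDegree ≤ d) (hqv : ∀ i ∈ Cs, q.eval (α i) = (g i).eval 0) :
    ∃ P : Polynomial (Polynomial F),
      (∀ k, (P.coeff k).natDegree ≤ d) ∧ P.natDegree ≤ t ∧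
      P.eval 0 = q ∧
      (∀ i ∈ Cs, P.eval (Polynomial.C (α i)) = f i) ∧
      (∀ i ∈ Cs, P.map (evalRingHom (α i)) = g i) := by
  exact stmt_9_general hα.injOn (fun i _ => hα0 i) hCs (hCs.trans (Nat.le_succ_of_le htd))
    hf hg hcons hq hqv
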